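/- arXiv:2112.15154 — 4 statements merged into one kernel-verified Lean document; each statement's English description precedes it below -/
import Mathlib

section
/- For ε ∈ [0,1), let ψ(M) denote the unique real solution of Kepler's equation M = ψ − ε·sin ψ. Then for every integer n ≥ 1, ∫_0^π (ψ(M) − M)·sin(nM) dM = (π/n)·J_n(nε), where J_n(x) = (1/π)·∫_0^π cos(nθ − x·sin θ) dθ. -/
open Real MeasureTheory intervalIntegral

/-- Bessel function of the first kind of integer order,
`J_n(x) = (1/π) ∫_0^π cos(nθ - x sin θ) dθ`. -/
noncomputable def besselJ (n : ℕ) (x : ℝ) : ℝ :=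
  (1 / π) * ∫ θ in (0:ℝ)..π, Real.cos (n * θ - x * Real.sin θ)

/-! Write `f E = E - ε sin E`, so that `ψ` is the inverse of `f`. Substituting `M = f t` turns the
integral into `∫ (t - f t) sin (n f t) f' t dt`. Since `f` fixes `0` and `π`, an integration by
parts has no boundary terms and leaves `(1/n) ∫ (cos (n f t) - cos (n t)) dt`; the second cosine
integrates to zero over `[0, π]`, and the first gives Bessel's integral. The substitution only needs
`ψ` to be continuous, which follows from the strict monotonicity of `f`; hence `|ε| = 1`, where `ψ`
is not differentiable everywhere, is covered as well. -/

section InverseFunction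

variable {f f' g G ψ : ℝ → ℝ} {a b : ℝ}

theorem integral_id_sub_mul_comp_mul_deriv (hf : ∀ t ∈ Set.uIcc a b, HasDerivAt f (f' t) t)
    (hf' : ContinuousOn f' (Set.uIcc a b)) (hG : ∀ x, HasDerivAt G (g x) x) (hg : Continuous g)
    (hfa : f a = a) (hfb : f b = b) :
    ∫ t in a..b, (t - f t) * (g (f t) * f' t) = ∫ t in a..b, (G t - G (f t)) := by
  have hf_cont : ContinuousOn f (Set.uIcc a b) := HasDerivAt.continuousOn hf
  have hG_cont : Continuous G := continuous_iff_continuousAt.2 fun x ↦ (hG x).continuousAt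
  have hGf_cont : ContinuousOn (fun t ↦ G (f t)) (Set.uIcc a b) := hG_cont.comp_continuousOn hf_cont
  have hGf_int : IntervalIntegrable (fun t ↦ G (f t)) volume a b := hGf_cont.intervalIntegrable
  have hprod_int : IntervalIntegrable (fun t ↦ G (f t) * f' t) volume a b :=
    (hGf_cont.mul hf').intervalIntegrable
  have by_parts : ∫ t in a..b, (t - f t) * (g (f t) * f' t) =
      -∫ t in a..b, (1 - f' t) * G (f t) := by
    have h := integral_mul_deriv_eq_deriv_mul
      (fun t ht ↦ (hasDerivAt_id' t).sub (hf t ht)) (fun t ht ↦ (hG (f t)).comp t (hf t ht))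
      (continuousOn_const.sub hf').intervalIntegrable
      ((hg.comp_continuousOn hf_cont).mul hf').intervalIntegrable
    simpa [hfa, hfb] using h
  have change_of_variables : ∫ t in a..b, G (f t) * f' t = ∫ t in a..b, G t := by
    simpa [hfa, hfb] using integral_comp_mul_deriv hf hf' hG_cont
  calc ∫ t in a..b, (t - f t) * (g (f t) * f' t)
      = ∫ t in a..b, (G (f t) * f' t - G (f t)) := by
        rw [by_parts, ← intervalIntegral.integral_neg]
        congr 1 with t
        ring
    _ = ∫ t in a..b, (G t - G (f t)) := by
        rw [intervalIntegral.integral_sub hprod_int hGf_int, change_of_variables,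
          ← intervalIntegral.integral_sub (hG_cont.intervalIntegrable a b) hGf_int]

theorem integral_leftInverse_sub_id_mul (hψf : Function.LeftInverse ψ f) (hψ : Continuous ψ)
    (hf : ∀ t ∈ Set.uIcc a b, HasDerivAt f (f' t) t) (hf' : ContinuousOn f' (Set.uIcc a b))
    (hG : ∀ x, HasDerivAt G (g x) x) (hg : Continuous g) (hfa : f a = a) (hfb : f b = b) :
    ∫ x in a..b, (ψ x - x) * g x = ∫ t in a..b, (G t - G (f t)) := by
  have substitution := integral_comp_mul_deriv hf hf' ((hψ.sub continuous_id).mul hg)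
  simp only [Function.comp_apply, Pi.mul_apply, Pi.sub_apply, id_eq, hψf _, hfa, hfb, mul_assoc]
    at substitution
  rw [← substitution, integral_id_sub_mul_comp_mul_deriv hf hf' hG hg hfa hfb]

end InverseFunction

theorem integral_cos_nat_mul_zero_pi {n : ℕ} (hn : n ≠ 0) : ∫ t in (0 : ℝ)..π, cos (n * t) = 0 := by
  simp [intervalIntegral.integral_comp_mul_left cos (Nat.cast_ne_zero.2 hn)]

theorem abs_sin_sub_sin_lt {x y : ℝ} (hxy : x ≠ y) : |sin x - sin y| < |x - y| :=
  calc |sin x - sin y| = 2 * |sin ((x - y) / 2)| * |cos ((x + y) / 2)| := by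
        rw [sin_sub_sin, abs_mul, abs_mul, abs_two]
    _ ≤ 2 * |sin ((x - y) / 2)| := mul_le_of_le_one_right (by positivity) (abs_cos_le_one _)
    _ < 2 * |(x - y) / 2| := by
        gcongr
        exact abs_sin_lt_abs (div_ne_zero (sub_ne_zero.2 hxy) two_ne_zero)
    _ = |x - y| := by rw [abs_div, abs_two, mul_div_cancel₀ _ two_ne_zero]

/-- The mean anomaly `M = E - ε sin E` as a function of the eccentric anomaly `E`, for an orbit of
eccentricity `ε`. A solution `ψ` of Kepler's equation is a right inverse of `meanAnomaly ε`. -/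
noncomputable def meanAnomaly (ε E : ℝ) : ℝ := E - ε * sin E

namespace meanAnomaly

theorem apply_zero (ε : ℝ) : meanAnomaly ε 0 = 0 := by simp [meanAnomaly]

theorem apply_pi (ε : ℝ) : meanAnomaly ε π = π := by simp [meanAnomaly]

theorem hasDerivAt (ε E : ℝ) : HasDerivAt (meanAnomaly ε) (1 - ε * cos E) E :=
  (hasDerivAt_id E).sub ((hasDerivAt_sin E).const_mul ε)

theorem strictMono {ε : ℝ} (hε : |ε| ≤ 1) : StrictMono (meanAnomaly ε) := by
  intro x y hxy
  have sin_term_lt : ε * (sin y - sin x) < y - x :=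
    calc ε * (sin y - sin x) ≤ |ε| * |sin y - sin x| := (le_abs_self _).trans (abs_mul _ _).le
      _ ≤ |sin y - sin x| := mul_le_of_le_one_left (abs_nonneg _) hε
      _ < |y - x| := abs_sin_sub_sin_lt hxy.ne'
      _ = y - x := abs_of_pos (sub_pos.2 hxy)
  unfold meanAnomaly
  linarith

end meanAnomaly

theorem besselJ_nat_mul (n : ℕ) (ε : ℝ) :
    besselJ n (n * ε) = (1 / π) * ∫ t in (0 : ℝ)..π, cos (n * meanAnomaly ε t) := by
  simp only [besselJ, meanAnomaly, mul_sub, mul_assoc]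

theorem kepler_fourier_coefficient_general {ε : ℝ} (hε : |ε| ≤ 1) {ψ : ℝ → ℝ}
    (hψ : Function.RightInverse ψ (meanAnomaly ε)) {n : ℕ} (hn : n ≠ 0) :
    ∫ M in (0 : ℝ)..π, (ψ M - M) * sin (n * M) = (π / n) * besselJ n (n * ε) := by
  have hmono := meanAnomaly.strictMono hε
  have hψ_left : Function.LeftInverse ψ (meanAnomaly ε) :=
    hψ.leftInverse_of_injective hmono.injective
  have hψ_cont : Continuous ψ := (hmono.orderIsoOfRightInverse _ ψ hψ).symm.continuous
  have hf_cont : Continuous (meanAnomaly ε) :=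
    continuous_iff_continuousAt.2 fun t ↦ (meanAnomaly.hasDerivAt ε t).continuousAt
  have hn' : (n : ℝ) ≠ 0 := Nat.cast_ne_zero.2 hn
  have hG (x : ℝ) : HasDerivAt (fun x ↦ -cos (n * x) / n) (sin (n * x)) x := by
    refine (((hasDerivAt_id' x).const_mul (n : ℝ)).cos.neg.div_const (n : ℝ)).congr_deriv ?_
    field_simp
  calc ∫ M in (0 : ℝ)..π, (ψ M - M) * sin (n * M)
      = ∫ t in (0 : ℝ)..π, (-cos (n * t) / n - -cos (n * meanAnomaly ε t) / n) :=
        integral_leftInverse_sub_id_mul hψ_left hψ_cont (fun t _ ↦ meanAnomaly.hasDerivAt ε t)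
          (by fun_prop) hG (by fun_prop) (meanAnomaly.apply_zero ε) (meanAnomaly.apply_pi ε)
    _ = (∫ t in (0 : ℝ)..π, cos (n * meanAnomaly ε t)) / n := by
        rw [intervalIntegral.integral_sub (Continuous.intervalIntegrable (by fun_prop) _ _)
          (Continuous.intervalIntegrable (by fun_prop) _ _)]
        simp [integral_cos_nat_mul_zero_pi hn, neg_div]
    _ = (π / n) * besselJ n (n * ε) := by
        rw [besselJ_nat_mul]
        field_simp

/-- If `ψ M` is the (unique) real solution of Kepler's equation
`M = ψ - ε sin ψ` with `ε ∈ [0,1)`, then for every integer `n ≥ 1`,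
`∫_0^π (ψ(M) - M) sin(nM) dM = (π/n) J_n(nε)`. -/
theorem kepler_fourier_coefficient (ε : ℝ) (hε : ε ∈ Set.Ico (0:ℝ) 1)
    (ψ : ℝ → ℝ) (hψ : ∀ M : ℝ, M = ψ M - ε * Real.sin (ψ M))
    (n : ℕ) (hn : 1 ≤ n) :
    ∫ M in (0:ℝ)..π, (ψ M - M) * Real.sin (n * M) = (π / n) * besselJ n (n * ε) :=
  kepler_fourier_coefficient_general ((abs_of_nonneg hε.1).trans_le hε.2.le) (fun M ↦ (hψ M).symm)
    (Nat.one_le_iff_ne_zero.1 hn)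
end

section
/- For every ε ∈ [0,1) and every M ∈ ℝ, the complex Kapteyn series Σ_{n=1}^∞ (2·J_n(nε)/n)·exp(i·n·M) converges in ℂ (i.e., its sequence of partial sums converges), where J_n(x) = (1/π)·∫_0^π cos(nθ − x·sin θ) dθ. -/
open Real MeasureTheory intervalIntegral Filter Complex

/-!
For `|x| < n` the phase `nθ - x sin θ` has derivative `n - x cos θ ≥ n - |x| > 0`, so the integral
defining `J_n(x)` has no stationary point. One integration by parts, whose boundary terms vanish
because the phase is a multiple of `π` at both ends, gives `|J_n(x)| ≤ |x| / (n - |x|)²`. For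
`x = nε` this is `O(1/n)`, so the terms of the Kapteyn series are `O(1/n²)`.
-/

lemma integral_cos_comp_eq_sub_add_integral {φ φ' φ'' : ℝ → ℝ} {a b : ℝ}
    (hφ : ∀ θ ∈ Set.uIcc a b, HasDerivAt φ (φ' θ) θ)
    (hφ' : ∀ θ ∈ Set.uIcc a b, HasDerivAt φ' (φ'' θ) θ)
    (hφ'' : ContinuousOn φ'' (Set.uIcc a b)) (hne : ∀ θ ∈ Set.uIcc a b, φ' θ ≠ 0) :
    ∫ θ in a..b, Real.cos (φ θ) =
      Real.sin (φ b) / φ' b - Real.sin (φ a) / φ' a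
        + ∫ θ in a..b, φ'' θ / φ' θ ^ 2 * Real.sin (φ θ) := by
  have φ_cont : ContinuousOn φ (Set.uIcc a b) := HasDerivAt.continuousOn hφ
  have φ'_cont : ContinuousOn φ' (Set.uIcc a b) := HasDerivAt.continuousOn hφ'
  have inv_deriv_integrable : IntervalIntegrable (fun θ => -φ'' θ / φ' θ ^ 2) volume a b :=
    (hφ''.neg.div (φ'_cont.pow 2) fun θ hθ => pow_ne_zero 2 (hne θ hθ)).intervalIntegrable
  have sin_deriv_integrable :
      IntervalIntegrable (fun θ => Real.cos (φ θ) * φ' θ) volume a b :=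
    ((Real.continuous_cos.comp_continuousOn φ_cont).mul φ'_cont).intervalIntegrable
  have by_parts := integral_mul_deriv_eq_deriv_mul
    (fun θ hθ => (hφ' θ hθ).fun_inv (hne θ hθ)) (fun θ hθ => (hφ θ hθ).sin)
    inv_deriv_integrable sin_deriv_integrable
  calc ∫ θ in a..b, Real.cos (φ θ)
      = ∫ θ in a..b, (φ' θ)⁻¹ * (Real.cos (φ θ) * φ' θ) :=
        integral_congr fun θ hθ => by have := hne θ hθ; field_simp
    _ = _ := by
        rw [by_parts]
        simp only [neg_div, neg_mul, intervalIntegral.integral_neg, sub_neg_eq_add,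
          inv_mul_eq_div]

lemma mul_cos_le_abs (x θ : ℝ) : x * Real.cos θ ≤ |x| :=
  calc x * Real.cos θ ≤ |x| * |Real.cos θ| := (le_abs_self _).trans_eq (abs_mul _ _)
    _ ≤ |x| := mul_le_of_le_one_right (abs_nonneg x) (Real.abs_cos_le_one θ)

lemma besselJ_eq_integral_div_sq_mul_sin {n : ℕ} {x : ℝ} (hx : |x| < n) :
    besselJ n x = (1 / π) * ∫ θ in (0:ℝ)..π,
      x * Real.sin θ / (n - x * Real.cos θ) ^ 2 * Real.sin (n * θ - x * Real.sin θ) := by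
  have phase_deriv (θ : ℝ) :
      HasDerivAt (fun θ : ℝ => n * θ - x * Real.sin θ) (n - x * Real.cos θ) θ := by
    simpa using ((hasDerivAt_id θ).const_mul (n : ℝ)).fun_sub ((Real.hasDerivAt_sin θ).const_mul x)
  have phase_deriv₂ (θ : ℝ) :
      HasDerivAt (fun θ : ℝ => n - x * Real.cos θ) (x * Real.sin θ) θ := by
    simpa using ((Real.hasDerivAt_cos θ).const_mul x).const_sub (n : ℝ)
  have phase_deriv_ne (θ : ℝ) : n - x * Real.cos θ ≠ 0 :=
    (sub_pos.2 ((mul_cos_le_abs x θ).trans_lt hx)).ne'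
  rw [besselJ, integral_cos_comp_eq_sub_add_integral (fun θ _ => phase_deriv θ)
    (fun θ _ => phase_deriv₂ θ) (by fun_prop) (fun θ _ => phase_deriv_ne θ)]
  simp [Real.sin_nat_mul_pi]

lemma abs_besselJ_le {n : ℕ} {x : ℝ} (hx : |x| < n) :
    |besselJ n x| ≤ |x| / (n - |x|) ^ 2 := by
  have : 0 < n - |x| := sub_pos.2 hx
  have integrand_le (θ : ℝ) :
      ‖x * Real.sin θ / (n - x * Real.cos θ) ^ 2 * Real.sin (n * θ - x * Real.sin θ)‖
        ≤ |x| / (n - |x|) ^ 2 := by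
    rw [Real.norm_eq_abs, abs_mul, abs_div, abs_mul, abs_sq]
    calc |x| * |Real.sin θ| / (n - x * Real.cos θ) ^ 2 * |Real.sin (n * θ - x * Real.sin θ)|
        ≤ |x| * 1 / (n - |x|) ^ 2 * 1 := by
          gcongr
          · exact Real.abs_sin_le_one θ
          · exact mul_cos_le_abs x θ
          · exact Real.abs_sin_le_one _
      _ = |x| / (n - |x|) ^ 2 := by ring
  have integral_le := norm_integral_le_of_norm_le_const (a := 0) (b := π)
    fun θ _ => integrand_le θ
  rw [sub_zero, abs_of_pos pi_pos, Real.norm_eq_abs] at integral_le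
  rwa [besselJ_eq_integral_div_sq_mul_sin hx, abs_mul, abs_of_pos (one_div_pos.2 pi_pos),
    one_div_mul_eq_div, div_le_iff₀ pi_pos]

lemma abs_besselJ_nat_mul_le {n : ℕ} (hn : n ≠ 0) {ε : ℝ} (hε : |ε| < 1) :
    |besselJ n (n * ε)| ≤ |ε| / (1 - |ε|) ^ 2 / n := by
  have n_pos : (0 : ℝ) < n := by positivity
  have abs_mul_eq : |n * ε| = n * |ε| := by rw [abs_mul, Nat.abs_cast]
  have gap_ne : 1 - |ε| ≠ 0 := (sub_pos.2 hε).ne'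
  calc |besselJ n (n * ε)| ≤ |n * ε| / (n - |n * ε|) ^ 2 :=
        abs_besselJ_le (abs_mul_eq ▸ mul_lt_of_lt_one_right n_pos hε)
    _ = n * |ε| / (n * (1 - |ε|)) ^ 2 := by rw [abs_mul_eq, mul_sub, mul_one]
    _ = |ε| / (1 - |ε|) ^ 2 / n := by field_simp

lemma norm_exp_I_mul_le_one {r : ℝ} (hr : 0 ≤ r) {z : ℂ} (hz : 0 ≤ z.im) :
    ‖Complex.exp (Complex.I * r * z)‖ ≤ 1 := by
  simpa [Complex.norm_exp] using mul_nonneg hr hz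

lemma norm_kapteyn_term_le {n : ℕ} (hn : n ≠ 0) {ε : ℝ} (hε : |ε| < 1) {M : ℂ}
    (hM : 0 ≤ M.im) :
    ‖((2 * besselJ n (n * ε) / n : ℝ) : ℂ) * Complex.exp (Complex.I * n * M)‖
      ≤ 2 * (|ε| / (1 - |ε|) ^ 2) * (1 / (n : ℝ) ^ 2) := by
  have exp_le : ‖Complex.exp (Complex.I * n * M)‖ ≤ 1 := by
    exact_mod_cast norm_exp_I_mul_le_one n.cast_nonneg hM
  calc ‖((2 * besselJ n (n * ε) / n : ℝ) : ℂ) * Complex.exp (Complex.I * n * M)‖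
      = 2 * |besselJ n (n * ε)| / n * ‖Complex.exp (Complex.I * n * M)‖ := by
        rw [norm_mul, Complex.norm_real, Real.norm_eq_abs, abs_div, abs_mul, abs_two,
          Nat.abs_cast]
    _ ≤ 2 * (|ε| / (1 - |ε|) ^ 2 / n) / n * 1 := by
        gcongr
        exact abs_besselJ_nat_mul_le hn hε
    _ = 2 * (|ε| / (1 - |ε|) ^ 2) * (1 / (n : ℝ) ^ 2) := by ring

theorem kapteyn_series_converges_general {ε : ℝ} (hε : |ε| < 1) {M : ℂ} (hM : 0 ≤ M.im) :
    Summable fun n : ℕ =>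
      ((2 * besselJ (n + 1) ((n + 1) * ε) / (n + 1) : ℝ) : ℂ) *
        Complex.exp (Complex.I * (n + 1) * M) := by
  have majorant_summable :
      Summable fun n : ℕ => 2 * (|ε| / (1 - |ε|) ^ 2) * (1 / ((n + 1 : ℕ) : ℝ) ^ 2) :=
    ((summable_nat_add_iff 1).2 (Real.summable_one_div_nat_pow.2 one_lt_two)).mul_left _
  refine majorant_summable.of_norm_bounded fun n => ?_
  simpa only [Nat.cast_succ] using norm_kapteyn_term_le n.succ_ne_zero hε hM

/-- For every `ε ∈ [0,1)` and every `M ∈ ℝ`, the complex Kapteyn series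
`Σ_{n=1}^∞ (2 J_n(nε)/n) exp(i n M)` converges in `ℂ`
(its sequence of partial sums converges). -/
theorem kapteyn_series_converges (ε : ℝ) (hε : ε ∈ Set.Ico (0:ℝ) 1) (M : ℝ) :
    ∃ L : ℂ, Tendsto (fun N : ℕ => ∑ n ∈ Finset.range N,
        ((2 * besselJ (n + 1) ((n + 1) * ε) / (n + 1) : ℝ) : ℂ) *
          Complex.exp (Complex.I * (n + 1) * (M : ℂ)))
      atTop (nhds L) := by
  have abs_lt_one : |ε| < 1 := (abs_of_nonneg hε.1).trans_lt hε.2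
  exact ⟨_, (kapteyn_series_converges_general abs_lt_one (ofReal_im M).ge).hasSum.tendsto_sum_nat⟩
end

section
/- For every ε ∈ (0,1), lim_{n→∞} √n · J_n(nε) / ρ(ε)^n = 1/√(2π·√(1−ε²)), where J_n(x) = (1/π)·∫_0^π cos(nθ − x·sin θ) dθ and ρ(ε) = exp(√(1−ε²))·(1 − √(1−ε²))/ε. -/
open Real MeasureTheory intervalIntegral Filter

/-- `ρ(ε) = exp(√(1-ε²))·(1-√(1-ε²))/ε`. -/
noncomputable def kapteynRho (ε : ℝ) : ℝ :=
  Real.exp (Real.sqrt (1 - ε ^ 2)) * (1 - Real.sqrt (1 - ε ^ 2)) / ε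

/-!
With `ε = 1 / cosh α` the integrand of `J_n(nε)` is the real part of `exp (i n (z - ε sin z))`,
whose saddle point is `z = iα`. This entire function is real on the vertical lines through `0`
and `π`, so moving the segment `[0, π]` up to height `α` does not change the real part of its
integral. On the shifted segment the integrand is `exp (n (tanh α - α))` times `exp (n φ(t))` with
`φ(t) = -tanh α (1 - cos t) + i (t - sin t) ~ -(tanh α / 2) t²`, and Laplace's method applies;
the prefactor is `ρ(ε) ^ n`.
-/

open scoped Topology Interval

section LaplaceMethod

lemma smul_integral_eq_integral_Ioi_indicator {E : Type*} [NormedAddCommGroup E] [NormedSpace ℝ E]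
    {r b : ℝ} (hr : 0 < r) (hb : 0 ≤ b) (g : ℝ → E) :
    r • ∫ t in 0..b, g t =
      ∫ u in Set.Ioi 0, (Set.Iic (b * r)).indicator (fun u => g (u / r)) u := by
  have rescaled : ∫ u in 0..b * r, g (u / r) = r • ∫ t in 0..b, g t := by
    rw [intervalIntegral.integral_comp_div g hr.ne', zero_div, mul_div_cancel_right₀ b hr.ne']
  rw [← rescaled, intervalIntegral.integral_of_le (by positivity),
    setIntegral_indicator measurableSet_Iic, Set.Ioi_inter_Iic]

theorem tendsto_smul_integral_of_dominated_rescaling {ι E : Type*} [NormedAddCommGroup E]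
    [NormedSpace ℝ E] {l : Filter ι} [l.IsCountablyGenerated] {r : ι → ℝ} {g : ι → ℝ → E}
    {G : ℝ → E} {bound : ℝ → ℝ} {b : ℝ} (hb : 0 < b) (hr : Tendsto r l atTop)
    (hg : ∀ᶠ i in l, StronglyMeasurable (g i))
    (hg_le : ∀ᶠ i in l, ∀ t ∈ Set.Ioc 0 b, ‖g i t‖ ≤ bound (r i * t))
    (hbound : IntegrableOn bound (Set.Ioi 0))
    (hlim : ∀ u > 0, Tendsto (fun i => g i (u / r i)) l (𝓝 (G u))) :
    Tendsto (fun i => r i • ∫ t in 0..b, g i t) l (𝓝 (∫ u in Set.Ioi 0, G u)) := by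
  have integral_eq : ∀ᶠ i in l, ∫ u in Set.Ioi 0,
      (Set.Iic (b * r i)).indicator (fun u => g i (u / r i)) u = r i • ∫ t in 0..b, g i t := by
    filter_upwards [hr.eventually_gt_atTop 0] with i hri
    exact (smul_integral_eq_integral_Ioi_indicator hri hb.le (g i)).symm
  refine Tendsto.congr' integral_eq
    (tendsto_integral_filter_of_dominated_convergence (fun u => ‖bound u‖) ?_ ?_ hbound.norm ?_)
  · filter_upwards [hg] with i hgi
    exact ((hgi.comp_measurable (measurable_id.div_const _)).indicator
      measurableSet_Iic).aestronglyMeasurable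
  · filter_upwards [hg_le, hr.eventually_gt_atTop 0] with i hgi hri
    filter_upwards [ae_restrict_mem measurableSet_Ioi] with u (hu : 0 < u)
    rcases le_or_gt u (b * r i) with hub | hub
    · have le_bound := hgi (u / r i) ⟨div_pos hu hri, (div_le_iff₀ hri).mpr hub⟩
      rw [mul_div_cancel₀ u hri.ne'] at le_bound
      simpa [hub] using le_bound.trans (le_abs_self _)
    · simp [hub]
  · filter_upwards [ae_restrict_mem measurableSet_Ioi] with u (hu : 0 < u)
    refine (hlim u hu).congr' ?_
    filter_upwards [hr.eventually_ge_atTop (u / b)] with i hi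
    have hui : u ∈ Set.Iic (b * r i) := (div_le_iff₀' hb).mp hi
    rw [Set.indicator_of_mem hui]

lemma tendsto_mul_comp_div_sqrt {φ : ℝ → ℂ} {c : ℂ}
    (hφ : Tendsto (fun t : ℝ => φ t / t ^ 2) (𝓝[>] 0) (𝓝 c)) {u : ℝ} (hu : 0 < u) :
    Tendsto (fun x : ℝ => x * φ (u / √x)) atTop (𝓝 (c * u ^ 2)) := by
  have shrink : Tendsto (fun x : ℝ => u / √x) atTop (𝓝[>] 0) := by
    refine tendsto_nhdsWithin_iff.mpr ⟨tendsto_sqrt_atTop.const_div_atTop u, ?_⟩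
    filter_upwards [eventually_gt_atTop 0] with x hx
    exact div_pos hu (sqrt_pos.mpr hx)
  refine ((hφ.comp shrink).mul_const ((u : ℂ) ^ 2)).congr' ?_
  filter_upwards [eventually_gt_atTop 0] with x hx
  have sq_eq : (√x : ℂ) ^ 2 = x := by rw [← Complex.ofReal_pow, sq_sqrt hx.le]
  have hu' : (u : ℂ) ≠ 0 := Complex.ofReal_ne_zero.mpr hu.ne'
  simp only [Function.comp_apply, Complex.ofReal_div, div_pow, sq_eq]
  field_simp

theorem tendsto_sqrt_mul_integral_cexp_mul {φ : ℝ → ℂ} {a : ℂ} {b k : ℝ} (hb : 0 < b) (hk : 0 < k)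
    (hφ : Measurable φ) (hφ_re : ∀ t ∈ Set.Ioc 0 b, (φ t).re ≤ -k * t ^ 2)
    (hφ_zero : Tendsto (fun t : ℝ => φ t / t ^ 2) (𝓝[>] 0) (𝓝 (-a))) :
    Tendsto (fun x : ℝ => √x * ∫ t in 0..b, Complex.exp (x * φ t)) atTop
      (𝓝 ((π / a) ^ (1 / 2 : ℂ) / 2)) := by
  have ha : 0 < a.re := by
    have re_le : (-a).re ≤ -k := by
      refine le_of_tendsto ((Complex.continuous_re.tendsto _).comp hφ_zero) ?_
      filter_upwards [Ioc_mem_nhdsGT hb] with t ht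
      rw [Function.comp_apply, ← Complex.ofReal_pow, Complex.div_ofReal_re,
        div_le_iff₀ (pow_pos ht.1 2)]
      exact hφ_re t ht
    linarith [Complex.neg_re a]
  rw [← integral_gaussian_complex_Ioi ha]
  simp_rw [← Complex.real_smul (x := √_)]
  refine tendsto_smul_integral_of_dominated_rescaling hb tendsto_sqrt_atTop
    (bound := fun u => rexp (-k * u ^ 2)) ?_ ?_ (integrable_exp_neg_mul_sq hk).integrableOn ?_
  · exact .of_forall fun x => (by fun_prop : Measurable _).stronglyMeasurable
  · filter_upwards [eventually_ge_atTop 0] with x hx t ht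
    rw [Complex.norm_exp, Complex.re_ofReal_mul, mul_pow, sq_sqrt hx]
    refine exp_le_exp.mpr ?_
    linear_combination mul_le_mul_of_nonneg_left (hφ_re t ht) hx
  · intro u hu
    exact (Complex.continuous_exp.tendsto _).comp (tendsto_mul_comp_div_sqrt hφ_zero hu)

end LaplaceMethod

section ContourShift

open Complex in
theorem re_integral_eq_of_im_eq_zero_on_vertical_sides {f : ℂ → ℂ} {a b c d : ℝ}
    (hf : DifferentiableOn ℂ f ([[a, b]] ×ℂ [[c, d]]))
    (ha : ∀ y ∈ [[c, d]], (f (a + y * I)).im = 0) (hb : ∀ y ∈ [[c, d]], (f (b + y * I)).im = 0) :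
    (∫ x in a..b, f (x + c * I)).re = (∫ x in a..b, f (x + d * I)).re := by
  have im_side {s : ℝ} (hs : ∀ y ∈ [[c, d]], (f (s + y * I)).im = 0) :
      (∫ y in c..d, f (s + y * I)).im = 0 := by
    have : ∫ y in c..d, f (s + y * I) = ∫ y in c..d, ((f (s + y * I)).re : ℂ) :=
      intervalIntegral.integral_congr fun y hy => Complex.ext rfl (by simpa using hs y hy)
    rw [this, intervalIntegral.integral_ofReal, ofReal_im]
  have cauchy := congrArg re (integral_boundary_rect_eq_zero_of_differentiableOn f
    (a + c * I) (b + d * I) (by simpa using hf))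
  simpa [im_side ha, im_side hb, sub_eq_zero] using cauchy

/-- The entire function `exp (i (n z - x sin z))`, whose real part on the real axis is the
integrand of `besselJ n x`. -/
noncomputable def besselKernel (n : ℕ) (x : ℝ) (z : ℂ) : ℂ :=
  Complex.exp (Complex.I * (n * z - x * Complex.sin z))

variable (n : ℕ) (x : ℝ)

lemma differentiable_besselKernel : Differentiable ℂ (besselKernel n x) := by
  unfold besselKernel
  fun_prop

open Complex in
lemma besselKernel_add_mul_I (t y : ℝ) :
    besselKernel n x (t + y * I) = cexp ((x * Real.sinh y * Real.cos t - n * y : ℝ) +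
      (n * t - x * Real.cosh y * Real.sin t : ℝ) * I) := by
  rw [besselKernel, sin_add_mul_I]
  push_cast
  congr 1
  linear_combination (n * y - x * Complex.cos t * Complex.sinh y) * I_sq

lemma besselKernel_im_eq_zero_of_sin_eq_zero {t : ℝ} (ht : Real.sin t = 0) (y : ℝ) :
    (besselKernel n x (t + y * Complex.I)).im = 0 := by
  have hnt : Real.sin (n * t) = 0 := by
    obtain ⟨k, rfl⟩ := Real.sin_eq_zero_iff.mp ht
    simpa [mul_assoc] using Real.sin_int_mul_pi (n * k)
  simp [besselKernel_add_mul_I, Complex.exp_im, ht, hnt]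

lemma besselJ_eq_re_integral_besselKernel :
    besselJ n x = (1 / π) * (∫ t in 0..π, besselKernel n x t).re := by
  have integrable : IntervalIntegrable (fun t : ℝ => besselKernel n x t) volume 0 π :=
    ((differentiable_besselKernel n x).continuous.comp
      Complex.continuous_ofReal).intervalIntegrable 0 π
  have re_kernel (t : ℝ) : (besselKernel n x t).re = Real.cos (n * t - x * Real.sin t) := by
    simpa [Complex.exp_re, Complex.sin_ofReal_re]
      using congrArg Complex.re (besselKernel_add_mul_I n x t 0)
  have re_integral := Complex.reCLM.intervalIntegral_comp_comm integrable
  simp only [Complex.reCLM_apply, re_kernel] at re_integral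
  rw [besselJ, re_integral]

theorem besselJ_eq_re_integral_besselKernel_add_mul_I (α : ℝ) :
    besselJ n x = (1 / π) * (∫ t in 0..π, besselKernel n x (t + α * Complex.I)).re := by
  rw [besselJ_eq_re_integral_besselKernel]
  congr 1
  simpa using re_integral_eq_of_im_eq_zero_on_vertical_sides (a := 0) (b := π) (c := 0) (d := α)
    (differentiable_besselKernel n x).differentiableOn
    (fun y _ => besselKernel_im_eq_zero_of_sin_eq_zero n x Real.sin_zero y)
    (fun y _ => besselKernel_im_eq_zero_of_sin_eq_zero n x Real.sin_pi y)

end ContourShift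

section SaddlePoint

lemma tendsto_one_sub_cos_div_sq :
    Tendsto (fun t : ℝ => (1 - Real.cos t) / t ^ 2) (𝓝[≠] 0) (𝓝 (1 / 2)) := by
  have sinc_limit : Tendsto (fun t : ℝ => Real.sinc (t / 2) ^ 2 / 2) (𝓝[≠] 0) (𝓝 (1 / 2)) := by
    have : Continuous fun t : ℝ => Real.sinc (t / 2) ^ 2 / 2 := by
      have := Real.continuous_sinc
      fun_prop
    simpa using (this.tendsto 0).mono_left nhdsWithin_le_nhds
  refine sinc_limit.congr' ?_
  filter_upwards [self_mem_nhdsWithin] with t (ht : t ≠ 0)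
  have half_angle : Real.cos t = 1 - 2 * Real.sin (t / 2) ^ 2 := by
    rw [← Real.cos_two_mul_eq_one_sub, mul_div_cancel₀ t two_ne_zero]
  rw [Real.sinc_of_ne_zero (by positivity), half_angle]
  field_simp
  ring

lemma tendsto_sub_sin_div_sq :
    Tendsto (fun t : ℝ => (t - Real.sin t) / t ^ 2) (𝓝[≠] 0) (𝓝 0) := by
  have bound_limit : Tendsto (fun t : ℝ => |t| / 6) (𝓝[≠] 0) (𝓝 0) := by
    have : Continuous fun t : ℝ => |t| / 6 := by fun_prop
    simpa using (this.tendsto 0).mono_left nhdsWithin_le_nhds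
  refine squeeze_zero_norm' ?_ bound_limit
  filter_upwards [self_mem_nhdsWithin] with t (ht : t ≠ 0)
  rw [Real.norm_eq_abs, abs_div, abs_pow, div_le_iff₀ (by positivity)]
  linarith [Real.abs_sub_sin_le t]

/-- The phase `i (z - sech α sin z)` on the line `z = t + iα` through its saddle point `iα`,
normalised to vanish there; the parameter `s` is `tanh α`. -/
noncomputable def debyePhase (s t : ℝ) : ℂ :=
  -(s * (1 - Real.cos t) : ℝ) + (t - Real.sin t : ℝ) * Complex.I

variable {s : ℝ}

lemma measurable_debyePhase : Measurable (debyePhase s) := by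
  unfold debyePhase
  fun_prop

lemma debyePhase_re_le (hs : 0 ≤ s) {t : ℝ} (ht : |t| ≤ π) :
    (debyePhase s t).re ≤ -(2 * s / π ^ 2) * t ^ 2 := by
  have re_eq : (debyePhase s t).re = -(s * (1 - Real.cos t)) := by
    simp [debyePhase, Complex.cos_ofReal_re]
  have cos_le := mul_le_mul_of_nonneg_left (Real.cos_le_one_sub_mul_cos_sq ht) hs
  rw [re_eq]
  linear_combination cos_le

lemma tendsto_debyePhase_div_sq :
    Tendsto (fun t : ℝ => debyePhase s t / t ^ 2) (𝓝[≠] 0) (𝓝 (-(s / 2 : ℝ))) := by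
  have limit := (tendsto_one_sub_cos_div_sq.const_mul s).ofReal.neg.add
    (tendsto_sub_sin_div_sq.ofReal.mul_const Complex.I)
  convert limit using 2 with t
  · simp only [debyePhase]
    push_cast
    ring
  · push_cast
    ring

theorem tendsto_sqrt_mul_integral_cexp_mul_debyePhase (hs : 0 < s) :
    Tendsto (fun x : ℝ => √x * ∫ t in 0..π, Complex.exp (x * debyePhase s t)) atTop
      (𝓝 (√(π / (2 * s)) : ℝ)) := by
  have laplace := tendsto_sqrt_mul_integral_cexp_mul pi_pos (by positivity : 0 < 2 * s / π ^ 2)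
    measurable_debyePhase
    (fun t ht => debyePhase_re_le hs.le (abs_le.mpr ⟨by linarith [ht.1, pi_pos], ht.2⟩))
    (tendsto_debyePhase_div_sq.mono_left (nhdsGT_le_nhdsNE 0))
  have gaussian_value : ((π : ℂ) / (s / 2 : ℝ)) ^ (1 / 2 : ℂ) / 2 = (√(π / (2 * s)) : ℝ) := by
    have quarter : π / (2 * s) = π / (s / 2) / 2 ^ 2 := by field_simp
    rw [quarter, sqrt_div' _ (by positivity), sqrt_sq zero_le_two, sqrt_eq_rpow]
    push_cast [Complex.ofReal_cpow (show 0 ≤ π / (s / 2) by positivity)]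
    rfl
  rwa [gaussian_value] at laplace

end SaddlePoint

section Debye

lemma besselKernel_div_cosh_add_mul_I (n : ℕ) (α t : ℝ) :
    besselKernel n (n / Real.cosh α) (t + α * Complex.I) =
      (rexp (Real.tanh α - α) ^ n : ℝ) * Complex.exp (n * debyePhase (Real.tanh α) t) := by
  have cosh_ne : Complex.cosh α ≠ 0 := by exact_mod_cast (Real.cosh_pos α).ne'
  rw [besselKernel_add_mul_I, debyePhase, ← Real.exp_nat_mul, Complex.ofReal_exp,
    ← Complex.exp_add, Real.tanh_eq_sinh_div_cosh]
  push_cast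
  congr 1
  field_simp
  ring

lemma sqrt_mul_besselJ_div_cosh (n : ℕ) (α : ℝ) :
    √n * besselJ n (n / Real.cosh α) / rexp (Real.tanh α - α) ^ n =
      1 / π * (√n * ∫ t in 0..π, Complex.exp (n * debyePhase (Real.tanh α) t)).re := by
  have exp_ne : rexp (Real.tanh α - α) ^ n ≠ 0 := by positivity
  simp only [besselJ_eq_re_integral_besselKernel_add_mul_I n _ α, besselKernel_div_cosh_add_mul_I,
    intervalIntegral.integral_const_mul, Complex.re_ofReal_mul]
  field_simp

theorem tendsto_besselJ_div_cosh {α : ℝ} (hα : 0 < α) :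
    Tendsto (fun n : ℕ => √n * besselJ n (n / Real.cosh α) / rexp (Real.tanh α - α) ^ n) atTop
      (𝓝 (1 / √(2 * π * Real.tanh α))) := by
  have tanh_pos : 0 < Real.tanh α := by
    rw [Real.tanh_eq_sinh_div_cosh]
    exact div_pos (Real.sinh_pos_iff.mpr hα) (Real.cosh_pos α)
  have limit := ((Complex.continuous_re.tendsto _).comp
    ((tendsto_sqrt_mul_integral_cexp_mul_debyePhase tanh_pos).comp
      tendsto_natCast_atTop_atTop)).const_mul (1 / π)
  have limit_value : 1 / π * √(π / (2 * Real.tanh α)) = 1 / √(2 * π * Real.tanh α) := by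
    have : π / (2 * Real.tanh α) = π ^ 2 / (2 * π * Real.tanh α) := by field_simp
    rw [this, sqrt_div (sq_nonneg π), sqrt_sq pi_pos.le]
    field_simp
  rw [Complex.ofReal_re, limit_value] at limit
  exact limit.congr fun n => (sqrt_mul_besselJ_div_cosh n α).symm

lemma sqrt_one_sub_inv_cosh_sq {α : ℝ} (hα : 0 ≤ α) :
    √(1 - (Real.cosh α)⁻¹ ^ 2) = Real.tanh α := by
  have cosh_pos := Real.cosh_pos α
  have tanh_nonneg : 0 ≤ Real.tanh α := by
    rw [Real.tanh_eq_sinh_div_cosh]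
    exact div_nonneg (Real.sinh_nonneg_iff.mpr hα) cosh_pos.le
  have tanh_sq : 1 - (Real.cosh α)⁻¹ ^ 2 = Real.tanh α ^ 2 := by
    rw [Real.tanh_eq_sinh_div_cosh]
    field_simp
    linear_combination Real.cosh_sq_sub_sinh_sq α
  rw [tanh_sq, sqrt_sq tanh_nonneg]

lemma kapteynRho_inv_cosh {α : ℝ} (hα : 0 ≤ α) :
    kapteynRho (Real.cosh α)⁻¹ = rexp (Real.tanh α - α) := by
  have one_sub_tanh : (1 - Real.tanh α) * Real.cosh α = rexp (-α) := by
    rw [sub_mul, one_mul, Real.tanh_eq_sinh_div_cosh, div_mul_cancel₀ _ (Real.cosh_pos α).ne',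
      Real.cosh_sub_sinh]
  rw [kapteynRho, sqrt_one_sub_inv_cosh_sq hα, div_inv_eq_mul, mul_assoc, one_sub_tanh,
    ← Real.exp_add, sub_eq_add_neg]

end Debye

/-- For `ε ∈ (0,1)`, `√n · J_n(nε) / ρ(ε)^n → 1/√(2π√(1-ε²))` as `n → ∞`
(leading-order Debye asymptotics of `J_n(nε)`). -/
theorem besselJ_debye_asymptotics (ε : ℝ) (hε : ε ∈ Set.Ioo (0:ℝ) 1) :
    Tendsto (fun n : ℕ => Real.sqrt n * besselJ n (n * ε) / kapteynRho ε ^ n)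
      atTop (nhds (1 / Real.sqrt (2 * π * Real.sqrt (1 - ε ^ 2)))) := by
  obtain ⟨α, hα, rfl⟩ : ∃ α > 0, (Real.cosh α)⁻¹ = ε := by
    have one_lt : 1 < ε⁻¹ := (one_lt_inv₀ hε.1).mpr hε.2
    exact ⟨arcosh ε⁻¹, arcosh_pos one_lt, by rw [cosh_arcosh one_lt.le, inv_inv]⟩
  rw [kapteynRho_inv_cosh hα.le, sqrt_one_sub_inv_cosh_sq hα.le]
  simpa only [← div_eq_mul_inv] using tendsto_besselJ_div_cosh hα
end

section
/- For every ε ∈ (0,1), the quantity ρ(ε) = exp(√(1−ε²))·(1 − √(1−ε²))/ε satisfies 0 < ρ(ε) < 1. -/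
open Real

/-!
With `s = √(1 - ε²)` one has `ε = √(1 - s²)` and `(1 - s) / √(1 - s²) = exp (-artanh s)`, so
`ρ(ε) = exp (s - artanh s)`. This is positive, and it is less than `1` because `s < artanh s`.
-/

theorem self_lt_artanh {x : ℝ} (hx : x ∈ Set.Ioo 0 1) : x < artanh x := by
  obtain ⟨hx₀, hx₁⟩ := hx
  have hquot : 0 < (1 + x) / (1 - x) := div_pos (by linarith) (by linarith)
  rw [artanh, lt_log_iff_exp_lt (sqrt_pos.mpr hquot), lt_sqrt (exp_nonneg x)]
  calc exp x ^ 2 = exp (2 * x) := (exp_nat_mul x 2).symm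
    _ < (2 + 2 * x) / (2 - 2 * x) := exp_lt_two_add_div_two_sub (by linarith) (by linarith)
    _ = (1 + x) / (1 - x) := by
      rw [← mul_div_mul_left (1 + x) (1 - x) two_ne_zero]
      ring

theorem exp_neg_artanh {x : ℝ} (hx : x ∈ Set.Ioo (-1) 1) :
    exp (-artanh x) = (1 - x) / √(1 - x ^ 2) := by
  rw [← cosh_sub_sinh, cosh_artanh hx, sinh_artanh hx, sub_div]

theorem sqrt_one_sub_sq_lt_one {x : ℝ} (hx : x ≠ 0) : √(1 - x ^ 2) < 1 := by
  rw [sqrt_lt' one_pos]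
  linarith [sq_pos_of_ne_zero hx]

theorem sqrt_one_sub_sq_sqrt_one_sub_sq {x : ℝ} (hx : x ∈ Set.Icc 0 1) :
    √(1 - √(1 - x ^ 2) ^ 2) = x := by
  have hsq : 0 ≤ 1 - x ^ 2 := sub_nonneg.mpr (pow_le_one₀ hx.1 hx.2)
  rw [sq_sqrt hsq, sub_sub_cancel, sqrt_sq hx.1]

theorem kapteynRho_eq_exp {ε : ℝ} (hε : ε ∈ Set.Ioc 0 1) :
    kapteynRho ε = exp (√(1 - ε ^ 2) - artanh √(1 - ε ^ 2)) := by
  have hs : √(1 - ε ^ 2) ∈ Set.Ioo (-1) 1 :=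
    ⟨neg_one_lt_zero.trans_le (sqrt_nonneg _), sqrt_one_sub_sq_lt_one hε.1.ne'⟩
  rw [kapteynRho, sub_eq_add_neg √(1 - ε ^ 2), exp_add, exp_neg_artanh hs,
    sqrt_one_sub_sq_sqrt_one_sub_sq (Set.Ioc_subset_Icc_self hε), mul_div_assoc]

/-- For every `ε ∈ (0,1)`, the quantity `ρ(ε)` satisfies `0 < ρ(ε) < 1`. -/
theorem kapteynRho_mem_Ioo (ε : ℝ) (hε : ε ∈ Set.Ioo (0:ℝ) 1) :
    0 < kapteynRho ε ∧ kapteynRho ε < 1 := by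
  have hsq : 0 < 1 - ε ^ 2 := sub_pos.mpr (pow_lt_one₀ hε.1.le hε.2 two_ne_zero)
  have hs : √(1 - ε ^ 2) ∈ Set.Ioo 0 1 := ⟨sqrt_pos.mpr hsq, sqrt_one_sub_sq_lt_one hε.1.ne'⟩
  rw [kapteynRho_eq_exp (Set.Ioo_subset_Ioc_self hε)]
  exact ⟨exp_pos _, exp_lt_one_iff.mpr (sub_neg.mpr (self_lt_artanh hs))⟩
end
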